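/- arXiv:2111.14932 — 2 statements merged into one kernel-verified Lean document; each statement's English description precedes it below -/
import Mathlib

section
/- Fix H ≥ 1, a positive real bound B, positive reals Φ₁, …, Φ_{H−1} and Θ, dimensions d₀, d₁, …, d_{H−1} ≥ 1, and activation functions a₁, …, a_{H−1} : ℝ → ℝ each of which is 1-Lipschitz and positively homogeneous (a_h(c·t) = c·a_h(t) for all c ≥ 0 and t ∈ ℝ). Let m ≥ 1 and let x₁, …, x_m ∈ ℝ^{d₀} with ‖x_n‖₂ ≤ B for every n. For weight matrices W_h ∈ ℝ^{d_h × d_{h−1}} (1 ≤ h ≤ H−1) with Frobenius norm ‖W_h‖_F ≤ Φ_h and a final weight vector θ ∈ ℝ^{d_{H−1}} with ‖θ‖₂ ≤ Θ, define the network f_{W,θ} : ℝ^{d₀} → ℝ by f_{W,θ}(x) = ⟨θ, ã_{H−1}(W_{H−1} · ã_{H−2}(W_{H−2} · ( ⋯ ã_1(W_1 x) ⋯ )))⟩, where ã_h applies a_h coordinatewise. Then the empirical Rademacher complexity of this network class satisfies 2^{−m} · Σ_{σ ∈ {−1,1}^m} sup_{W,θ} (1/m) · Σ_{n=1}^{m}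 σ_n · f_{W,θ}(x_n) ≤ B·(√(2H·log 2) + 1)·Θ·Π_{h=1}^{H−1} Φ_h / √m. -/
/-!
The supremum over networks is controlled through exponential moments. For each sign pattern `σ`
choose competing weights; by Cauchy–Schwarz the signed sum of network values is at most `Θ` times
the norm of the signed sum of last-layer outputs. The exponential moment of this norm is estimated
by peeling off layers (`peel`): positive homogeneity concentrates a weight matrix on one unit row
(`exists_unit_row`), the absolute value costs a factor `2`, and the contraction principle
(`contraction`) removes the activation. After all layers have been peeled off, only the Rademacher
sum of the inputs remains, whose exponential moment is bounded by `base_bound`. Taking logarithms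
(`jensen_exp`) turns the product of the factors `2` into a term at most `H * log 2`, and optimizing
the exponential parameter puts this term under a square root.

Suprema are handled throughout by quantifying over selections `σ ↦ t σ` of competitors: a bound on
`∑ σ, F σ (t σ)` for all selections is a bound on `∑ σ, sup F σ`, see `sum_sSup_le`.
-/

open Finset Real

/-- Forward pass of a fully-connected network with layer widths `d 0, d 1, …`:
`netLayer d a W x h` is the output of layer `h` on input `x`, where `W h` is the weight
matrix from layer `h` to layer `h+1` (the paper's `W_{h+1}`) and `a (h+1)` is the
activation applied coordinatewise after it. -/
noncomputable def netLayer (d : ℕ → ℕ) (a : ℕ → ℝ → ℝ)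
    (W : ∀ h : ℕ, Matrix (Fin (d (h + 1))) (Fin (d h)) ℝ)
    (x : Fin (d 0) → ℝ) : (h : ℕ) → Fin (d h) → ℝ
  | 0 => x
  | h + 1 => fun i => a (h + 1) ((W h).mulVec (netLayer d a W x h) i)

/-- Frobenius norm of a real matrix. -/
noncomputable def frobeniusNorm {p q : ℕ} (W : Matrix (Fin p) (Fin q) ℝ) : ℝ :=
  Real.sqrt (∑ i, ∑ j, (W i j) ^ 2)

/-- Euclidean norm of a real vector. -/
noncomputable def l2Norm {p : ℕ} (v : Fin p → ℝ) : ℝ :=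
  Real.sqrt (∑ i, (v i) ^ 2)

/-! ### Signs and Euclidean norms -/

/-- The Rademacher sign encoded by a Boolean: `true` is `1`, `false` is `-1`. -/
def sgn (b : Bool) : ℝ := if b then 1 else -1

lemma sgn_not (b : Bool) : sgn (!b) = -sgn b := by cases b <;> simp [sgn]

lemma l2Norm_eq {p : ℕ} (v : Fin p → ℝ) : l2Norm v = ‖WithLp.toLp 2 v‖ := by
  simp [l2Norm, EuclideanSpace.norm_eq]

lemma l2Norm_nonneg {p : ℕ} (v : Fin p → ℝ) : 0 ≤ l2Norm v := Real.sqrt_nonneg _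

lemma sum_mul_le_l2Norm {p : ℕ} (v w : Fin p → ℝ) :
    ∑ i, v i * w i ≤ l2Norm v * l2Norm w :=
  Real.sum_mul_le_sqrt_mul_sqrt _ _ _

/-! ### Contraction principle -/

/-- Weak majorization for the exponential: if `(α, β)` is weakly majorized by `(M, N)`, then
`exp α + exp β ≤ exp M + exp N`. -/
lemma exp_add_exp_le {α β M N : ℝ} (hα : α ≤ max M N) (hβ : β ≤ max M N)
    (hs : α + β ≤ M + N) : exp α + exp β ≤ exp M + exp N := by
  wlog hMN : N ≤ M generalizing M N
  · have := this (M := N) (N := M) (by rwa [max_comm]) (by rwa [max_comm]) (by linarith)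
      (by linarith)
    linarith
  rw [max_eq_left hMN] at hα hβ
  have h1 := exp_le_exp.2 hα
  have h2 := exp_le_exp.2 hβ
  have h3 := exp_le_exp.2 hs
  rw [exp_add, exp_add] at h3
  by_cases hn : exp α ≤ exp N
  · linarith
  · push Not at hn
    have ha := exp_pos α
    have : exp α * (exp α + exp β) ≤ exp α * (exp M + exp N) := by
      nlinarith [mul_nonneg (sub_nonneg.2 h1) (sub_nonneg.2 hn.le)]
    exact le_of_mul_le_mul_left this ha

/-- The two-point inequality behind the contraction principle. Each of the two competitors
`(u₁, s₁)`, `(u₂, s₂)` may be used for either sign on the right, so no optimality of the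
competitors on the left is needed. -/
lemma exp_pair_le {u₁ u₂ s₁ s₂ p₁ p₂ : ℝ} (h₁ : |p₁| ≤ |s₁|) (h₂ : |p₂| ≤ |s₂|)
    (h : |p₁ - p₂| ≤ |s₁ - s₂|) :
    exp (u₁ + p₁) + exp (u₂ - p₂) ≤
      exp (max (u₁ + s₁) (u₂ + s₂)) + exp (max (u₂ - s₂) (u₁ - s₁)) := by
  have a1 := le_max_left (u₁ + s₁) (u₂ + s₂)
  have a2 := le_max_right (u₁ + s₁) (u₂ + s₂)
  have a3 := le_max_left (u₂ - s₂) (u₁ - s₁)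
  have a4 := le_max_right (u₂ - s₂) (u₁ - s₁)
  set M := max (u₁ + s₁) (u₂ + s₂)
  set N := max (u₂ - s₂) (u₁ - s₁)
  have b1 := le_max_left M N
  have b2 := le_max_right M N
  have c1 := abs_le.1 h₁
  have c2 := abs_le.1 h₂
  have c3 := abs_le.1 h
  apply exp_add_exp_le
  · rcases abs_cases s₁ with h | h <;> linarith
  · rcases abs_cases s₂ with h | h <;> linarith
  · rcases abs_cases (s₁ - s₂) with h | h <;> linarith

/-- The sign pattern `σ` with its `k`-th sign reversed. -/
def flipAt {m : ℕ} (k : Fin m) (σ : Fin m → Bool) : Fin m → Bool :=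
  Function.update σ k (!σ k)

lemma flipAt_flipAt {m : ℕ} (k : Fin m) (σ : Fin m → Bool) : flipAt k (flipAt k σ) = σ := by
  simp [flipAt]

lemma sum_flipAt {m : ℕ} (k : Fin m) (F : (Fin m → Bool) → ℝ) :
    ∑ σ, F (flipAt k σ) = ∑ σ, F σ :=
  Equiv.sum_comp (Function.Involutive.toPerm (flipAt k) (flipAt_flipAt k)) F

/-- One coordinate of the contraction principle: replacing the identity by `φ` in coordinate `k`
preserves an exponential-moment bound which is uniform over all selections `σ ↦ t σ ∈ S`.
Quantifying over selections expresses `∑ σ, sup_{t ∈ S} (…) ≤ C` without forming suprema. -/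
lemma contraction_step {m : ℕ} (S : Set (Fin m → ℝ)) (C μ : ℝ) (φ : ℝ → ℝ)
    (hφ : LipschitzWith 1 φ) (hφ0 : φ 0 = 0) (ψ ψ' : Fin m → ℝ → ℝ) (k : Fin m)
    (hk : ψ k = id) (hk' : ψ' k = φ) (hne : ∀ n, n ≠ k → ψ' n = ψ n)
    (hS : ∀ t : (Fin m → Bool) → Fin m → ℝ, (∀ σ, t σ ∈ S) →
      ∑ σ, exp (μ * ∑ n, sgn (σ n) * ψ n (t σ n)) ≤ C)
    (t : (Fin m → Bool) → Fin m → ℝ) (ht : ∀ σ, t σ ∈ S) :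
    ∑ σ, exp (μ * ∑ n, sgn (σ n) * ψ' n (t σ n)) ≤ C := by
  classical
  set V : (Fin m → Bool) → (Fin m → ℝ) → ℝ := fun σ v => μ * ∑ n, sgn (σ n) * ψ n (v n) with hV
  have hlip : ∀ r s, |φ r - φ s| ≤ |r - s| := fun r s => by
    simpa [Real.dist_eq] using hφ.dist_le_mul r s
  have hbase : ∀ r, |φ r| ≤ |r| := fun r => by simpa [hφ0] using hlip r 0
  -- `t' σ` is the better, for the sign pattern `σ`, of the points selected at `σ` and at its flip;
  -- the selection `t'` dominates `t` after summing over each pair `{σ, flipAt k σ}`.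
  let t' : (Fin m → Bool) → Fin m → ℝ := fun σ =>
    if V σ (t (flipAt k σ)) ≤ V σ (t σ) then t σ else t (flipAt k σ)
  have ht' : ∀ σ, t' σ ∈ S := fun σ => by
    simp only [t']; split_ifs <;> exact ht _
  have hVt' : ∀ σ, V σ (t' σ) = max (V σ (t σ)) (V σ (t (flipAt k σ))) := fun σ => by
    simp only [t']; split_ifs with h
    · rw [max_eq_left h]
    · rw [max_eq_right (not_le.1 h).le]
  have hpair : ∀ σ, exp (μ * ∑ n, sgn (σ n) * ψ' n (t σ n)) +
      exp (μ * ∑ n, sgn (flipAt k σ n) * ψ' n (t (flipAt k σ) n)) ≤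
      exp (V σ (t' σ)) + exp (V (flipAt k σ) (t' (flipAt k σ))) := by
    intro σ
    rw [hVt', hVt', flipAt_flipAt]
    set v := t σ
    set w := t (flipAt k σ)
    set u : (Fin m → ℝ) → ℝ := fun v => ∑ n ∈ univ.erase k, sgn (σ n) * ψ n (v n) with hu
    have e1 : ∀ v, V σ v = μ * u v + μ * sgn (σ k) * v k := fun v => by
      simp only [hV, hu]
      rw [← Finset.add_sum_erase _ _ (mem_univ k), hk]; simp only [id]; ring
    have e2 : ∀ v, V (flipAt k σ) v = μ * u v - μ * sgn (σ k) * v k := fun v => by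
      simp only [hV, hu]
      rw [← Finset.add_sum_erase _ _ (mem_univ k), hk]
      rw [Finset.sum_congr rfl (g := fun n => sgn (σ n) * ψ n (v n))]
      · simp only [id, flipAt, Function.update_self, sgn_not]; ring
      · intro n hn
        simp [flipAt, Function.update_of_ne (Finset.ne_of_mem_erase hn)]
    have e3 : ∀ v : Fin m → ℝ, μ * ∑ n, sgn (σ n) * ψ' n (v n) =
        μ * u v + μ * sgn (σ k) * φ (v k) := fun v => by
      simp only [hu]
      rw [← Finset.add_sum_erase _ _ (mem_univ k), hk']
      rw [Finset.sum_congr rfl (g := fun n => sgn (σ n) * ψ n (v n))]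
      · ring
      · intro n hn
        rw [hne n (Finset.ne_of_mem_erase hn)]
    have e4 : ∀ v : Fin m → ℝ, μ * ∑ n, sgn (flipAt k σ n) * ψ' n (v n) =
        μ * u v - μ * sgn (σ k) * φ (v k) := fun v => by
      simp only [hu]
      rw [← Finset.add_sum_erase _ _ (mem_univ k), hk']
      rw [Finset.sum_congr rfl (g := fun n => sgn (σ n) * ψ n (v n))]
      · simp only [flipAt, Function.update_self, sgn_not]; ring
      · intro n hn
        rw [hne n (Finset.ne_of_mem_erase hn)]
        simp [flipAt, Function.update_of_ne (Finset.ne_of_mem_erase hn)]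
    rw [e1, e1, e2, e2, e3, e4]
    apply exp_pair_le
    · rw [abs_mul (μ * sgn (σ k)), abs_mul (μ * sgn (σ k))]
      exact mul_le_mul_of_nonneg_left (hbase _) (abs_nonneg _)
    · rw [abs_mul (μ * sgn (σ k)), abs_mul (μ * sgn (σ k))]
      exact mul_le_mul_of_nonneg_left (hbase _) (abs_nonneg _)
    · rw [← mul_sub, ← mul_sub, abs_mul (μ * sgn (σ k)), abs_mul (μ * sgn (σ k))]
      exact mul_le_mul_of_nonneg_left (hlip _ _) (abs_nonneg _)
  have hsum := Finset.sum_le_sum fun σ (_ : σ ∈ univ) => hpair σ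
  rw [Finset.sum_add_distrib, Finset.sum_add_distrib,
    sum_flipAt k fun σ => exp (μ * ∑ n, sgn (σ n) * ψ' n (t σ n)),
    sum_flipAt k fun σ => exp (V σ (t' σ))] at hsum
  have := hS t' ht'
  simp only [hV] at hsum
  linarith

/-- The Ledoux–Talagrand contraction principle for exponential moments, without absolute values;
see `contraction_step` for the encoding of the supremum. -/
lemma contraction {m : ℕ} (S : Set (Fin m → ℝ)) (C μ : ℝ) (φ : ℝ → ℝ)
    (hφ : LipschitzWith 1 φ) (hφ0 : φ 0 = 0)
    (hS : ∀ t : (Fin m → Bool) → Fin m → ℝ, (∀ σ, t σ ∈ S) →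
      ∑ σ, exp (μ * ∑ n, sgn (σ n) * t σ n) ≤ C)
    (t : (Fin m → Bool) → Fin m → ℝ) (ht : ∀ σ, t σ ∈ S) :
    ∑ σ, exp (μ * ∑ n, sgn (σ n) * φ (t σ n)) ≤ C := by
  classical
  have key : ∀ A : Finset (Fin m), ∀ t : (Fin m → Bool) → Fin m → ℝ, (∀ σ, t σ ∈ S) →
      ∑ σ, exp (μ * ∑ n, sgn (σ n) * (if n ∈ A then φ else id) (t σ n)) ≤ C := by
    intro A
    induction A using Finset.induction_on with
    | empty => simpa using hS
    | insert k A hkA ih =>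
      refine contraction_step S C μ φ hφ hφ0 (fun n => if n ∈ A then φ else id)
        (fun n => if n ∈ insert k A then φ else id) k (by simp [hkA]) (by simp) ?_ ih
      intro n hn
      simp [hn]
  simpa using key univ t ht

/-! ### Peeling of a layer -/

/-- By homogeneity, the norm of the signed sum after a layer is at most the Frobenius bound times
the contribution of a single unit neuron, namely the best of the normalized rows of `V`. -/
lemma exists_unit_row {p q m : ℕ} (V : Matrix (Fin q) (Fin p) ℝ) (R : ℝ) (hR : 0 ≤ R)
    (hV : frobeniusNorm V ≤ R) (a : ℝ → ℝ)
    (ha : ∀ c : ℝ, 0 ≤ c → ∀ t : ℝ, a (c * t) = c * a t) (s : Fin m → ℝ)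
    (f : Fin m → Fin p → ℝ) :
    ∃ w : Fin p → ℝ, l2Norm w ≤ 1 ∧
      l2Norm (fun i => ∑ n, s n * a (V.mulVec (f n) i)) ≤
        R * |∑ n, s n * a (∑ j, w j * f n j)| := by
  rcases isEmpty_or_nonempty (Fin q) with hq | hq
  · refine ⟨0, by simp [l2Norm], ?_⟩
    have : l2Norm (fun i => ∑ n, s n * a (V.mulVec (f n) i)) = 0 := by simp [l2Norm]
    rw [this]; positivity
  let r : Fin q → ℝ := fun i => l2Norm (V i)
  -- The normalization of a zero row is zero, since `0⁻¹ = 0`.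
  let w : Fin q → Fin p → ℝ := fun i j => (r i)⁻¹ * V i j
  let Q : Fin q → ℝ := fun i => ∑ n, s n * a (∑ j, w i j * f n j)
  have hr : ∀ i, 0 ≤ r i := fun i => l2Norm_nonneg _
  have hr2 : ∀ i, r i ^ 2 = ∑ j, V i j ^ 2 := fun i =>
    Real.sq_sqrt (Finset.sum_nonneg fun _ _ => sq_nonneg _)
  have hVw : ∀ i j, V i j = r i * w i j := by
    intro i j
    by_cases h : r i = 0
    · have h2 := hr2 i
      rw [h, zero_pow two_ne_zero, eq_comm,
        Finset.sum_eq_zero_iff_of_nonneg fun _ _ => sq_nonneg _] at h2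
      simpa [h] using h2 j (mem_univ j)
    · simp only [w]; field_simp
  have hw : ∀ i, l2Norm (w i) ≤ 1 := by
    intro i
    have : l2Norm (w i) = (r i)⁻¹ * r i := by
      rw [l2Norm, ← Real.sqrt_sq (mul_nonneg (inv_nonneg.2 (hr i)) (hr i)), mul_pow, hr2,
        Finset.mul_sum]
      simp only [w, mul_pow]
    rw [this]
    exact inv_mul_le_one
  obtain ⟨i₀, hi₀⟩ := Finite.exists_max fun i => |Q i|
  refine ⟨w i₀, hw i₀, ?_⟩
  have hz : ∀ i, ∑ n, s n * a (V.mulVec (f n) i) = r i * Q i := by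
    intro i
    simp only [Q, Finset.mul_sum]
    refine Finset.sum_congr rfl fun n _ => ?_
    have : V.mulVec (f n) i = r i * ∑ j, w i j * f n j := by
      simp only [Matrix.mulVec, dotProduct, Finset.mul_sum]
      exact Finset.sum_congr rfl fun j _ => by rw [hVw i j]; ring
    rw [this, ha _ (hr i)]; ring
  have hfr : ∑ i, r i ^ 2 ≤ R ^ 2 := by
    simp only [hr2]
    exact (Real.sqrt_le_left hR).1 hV
  change l2Norm _ ≤ R * |Q i₀|
  rw [l2Norm]
  refine Real.sqrt_le_iff.2 ⟨by positivity, ?_⟩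
  calc ∑ i, (∑ n, s n * a (V.mulVec (f n) i)) ^ 2 = ∑ i, r i ^ 2 * |Q i| ^ 2 := by
        simp only [hz, mul_pow, sq_abs]
    _ ≤ ∑ i, r i ^ 2 * |Q i₀| ^ 2 := by
        exact Finset.sum_le_sum fun i _ => mul_le_mul_of_nonneg_left
          (pow_le_pow_left₀ (abs_nonneg _) (hi₀ i) 2) (sq_nonneg _)
    _ = (∑ i, r i ^ 2) * |Q i₀| ^ 2 := by rw [Finset.sum_mul]
    _ ≤ (R * |Q i₀|) ^ 2 := by rw [mul_pow]; gcongr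

/-- Peeling of one layer: passing through weights of Frobenius norm at most `R` and an activation
multiplies the exponential moment by at most `2`, with `R` absorbed into the parameter. The
factor `2` is the cost of removing the absolute value produced by `exists_unit_row`. -/
lemma peel {p q m : ℕ} (F : Set (Fin m → Fin p → ℝ)) (C lam R : ℝ) (hlam : 0 ≤ lam) (hR : 0 ≤ R)
    (a : ℝ → ℝ) (ha_lip : LipschitzWith 1 a)
    (ha : ∀ c : ℝ, 0 ≤ c → ∀ t : ℝ, a (c * t) = c * a t)
    (hF : ∀ f : (Fin m → Bool) → Fin m → Fin p → ℝ, (∀ σ, f σ ∈ F) →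
      ∑ σ, exp (lam * R * l2Norm (fun i => ∑ n, sgn (σ n) * f σ n i)) ≤ C)
    (f : (Fin m → Bool) → Fin m → Fin p → ℝ) (hf : ∀ σ, f σ ∈ F)
    (V : (Fin m → Bool) → Matrix (Fin q) (Fin p) ℝ) (hV : ∀ σ, frobeniusNorm (V σ) ≤ R) :
    ∑ σ, exp (lam * l2Norm (fun i => ∑ n, sgn (σ n) * a ((V σ).mulVec (f σ n) i))) ≤ 2 * C := by
  have hμ : 0 ≤ lam * R := mul_nonneg hlam hR
  choose w hw1 hw using fun σ => exists_unit_row (V σ) R hR (hV σ) a ha (fun n => sgn (σ n)) (f σ)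
  let S : Set (Fin m → ℝ) :=
    {t | ∃ g ∈ F, ∃ w : Fin p → ℝ, l2Norm w ≤ 1 ∧ t = fun n => ∑ j, w j * g n j}
  have hS : ∀ t : (Fin m → Bool) → Fin m → ℝ, (∀ σ, t σ ∈ S) →
      ∑ σ, exp (lam * R * ∑ n, sgn (σ n) * t σ n) ≤ C := by
    intro t ht
    choose g hg v hv htv using ht
    refine le_trans (Finset.sum_le_sum fun σ _ => ?_) (hF g hg)
    refine exp_le_exp.2 (mul_le_mul_of_nonneg_left ?_ hμ)
    calc ∑ n, sgn (σ n) * t σ n = ∑ j, v σ j * ∑ n, sgn (σ n) * g σ n j := by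
          simp only [htv, Finset.mul_sum]
          rw [Finset.sum_comm]
          exact Finset.sum_congr rfl fun _ _ => Finset.sum_congr rfl fun _ _ => by ring
      _ ≤ l2Norm (v σ) * l2Norm (fun j => ∑ n, sgn (σ n) * g σ n j) := sum_mul_le_l2Norm _ _
      _ ≤ _ := mul_le_of_le_one_left (l2Norm_nonneg _) (hv σ)
  have ha0 : a 0 = 0 := by simpa using ha 0 le_rfl 0
  have hcon := contraction S C (lam * R) a ha_lip ha0 hS
  let t : (Fin m → Bool) → Fin m → ℝ := fun σ n => ∑ j, w σ j * f σ n j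
  have ht : ∀ σ, t σ ∈ S := fun σ => ⟨f σ, hf σ, w σ, hw1 σ, rfl⟩
  have h1 := hcon t ht
  -- The term with the opposite sign is the same quantity after reversing all signs.
  let neg : (Fin m → Bool) → Fin m → Bool := fun σ n => !σ n
  have hneg : Function.Involutive neg := fun σ => by funext n; simp [neg]
  have h2 := hcon (fun σ => t (neg σ)) fun σ => ht _
  rw [← Equiv.sum_comp hneg.toPerm] at h2
  have h3 : ∑ σ, exp (-(lam * R * ∑ n, sgn (σ n) * a (t σ n))) ≤ C := by
    refine le_trans (le_of_eq ?_) h2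
    refine Finset.sum_congr rfl fun σ _ => ?_
    have : neg (neg σ) = σ := hneg σ
    simp only [Function.Involutive.coe_toPerm, this]
    simp only [neg, sgn_not, neg_mul, Finset.sum_neg_distrib, mul_neg]
  calc _ ≤ ∑ σ, (exp (lam * R * ∑ n, sgn (σ n) * a (t σ n)) +
        exp (-(lam * R * ∑ n, sgn (σ n) * a (t σ n)))) := by
        refine Finset.sum_le_sum fun σ _ => ?_
        set z := ∑ n, sgn (σ n) * a (t σ n) with hz
        have h4 : lam * l2Norm (fun i => ∑ n, sgn (σ n) * a ((V σ).mulVec (f σ n) i)) ≤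
            |lam * R * z| := by
          rw [abs_mul, abs_of_nonneg hμ, mul_assoc]
          exact mul_le_mul_of_nonneg_left (hw σ) hlam
        refine (exp_le_exp.2 h4).trans ?_
        rcases abs_cases (lam * R * z) with h | h <;> rw [h.1]
        · linarith [exp_pos (-(lam * R * z))]
        · linarith [exp_pos (lam * R * z)]
    _ ≤ 2 * C := by rw [Finset.sum_add_distrib]; linarith

/-! ### Rademacher sums of the inputs -/

lemma exp_average_le {p q c : ℝ} (h : |p - q| ≤ 2 * c) :
    exp p + exp q ≤ 2 * exp ((p + q) / 2 + c ^ 2 / 2) := by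
  have h1 : exp p + exp q = 2 * (exp ((p + q) / 2) * cosh ((p - q) / 2)) := by
    rw [cosh_eq, mul_div_assoc', mul_add, ← exp_add, ← exp_add]
    ring_nf
  rw [h1, exp_add]
  gcongr
  refine (cosh_le_exp_half_sq _).trans (exp_le_exp.2 ?_)
  have h2 : (p - q) ^ 2 ≤ (2 * c) ^ 2 := sq_le_sq' (by linarith [(abs_le.1 h).1]) (abs_le.1 h).2
  nlinarith

lemma sum_cons {m : ℕ} (F : (Fin (m + 1) → Bool) → ℝ) :
    ∑ σ, F σ = ∑ σ : Fin m → Bool, (F (Fin.cons true σ) + F (Fin.cons false σ)) := by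
  rw [← Equiv.sum_comp (Fin.consEquiv fun _ => Bool), Fintype.sum_prod_type]
  simp [Fin.consEquiv, Finset.sum_add_distrib]

/-- Bounded-differences estimate of the moment generating function of a function of independent
signs, by averaging out one sign at a time. -/
lemma bounded_differences {c : ℝ} : ∀ (m : ℕ) (f : (Fin m → Bool) → ℝ),
    (∀ k σ, |f (Function.update σ k true) - f (Function.update σ k false)| ≤ 2 * c) →
    ∑ σ, exp (f σ) ≤ 2 ^ m * exp ((∑ σ, f σ) / 2 ^ m + m * (c ^ 2 / 2))
  | 0, f, _ => by simp
  | m + 1, f, hf => by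
    let g : (Fin m → Bool) → ℝ := fun σ => (f (Fin.cons true σ) + f (Fin.cons false σ)) / 2
    have hg := bounded_differences (c := c) m g fun k σ => by
      have h1 := hf k.succ (Fin.cons true σ)
      have h2 := hf k.succ (Fin.cons false σ)
      rw [← Fin.cons_update, ← Fin.cons_update] at h1 h2
      rw [abs_le] at *
      simp only [g]
      constructor <;> linarith
    have hgs : ∑ σ, g σ = (∑ σ, f σ) / 2 := by
      rw [sum_cons, Finset.sum_div]
    rw [sum_cons]
    calc _ ≤ ∑ σ, 2 * exp (g σ + c ^ 2 / 2) := by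
          refine Finset.sum_le_sum fun σ _ => exp_average_le ?_
          have := hf 0 (Fin.cons true σ)
          rwa [Fin.update_cons_zero, Fin.update_cons_zero] at this
      _ = 2 * exp (c ^ 2 / 2) * ∑ σ, exp (g σ) := by
          rw [Finset.mul_sum]
          exact Finset.sum_congr rfl fun _ _ => by rw [exp_add]; ring
      _ ≤ 2 * exp (c ^ 2 / 2) *
          (2 ^ m * exp ((∑ σ, g σ) / 2 ^ m + m * (c ^ 2 / 2))) := by gcongr
      _ = _ := by
          rw [hgs, show (∑ σ, f σ) / 2 ^ (m + 1) + ((m + 1 : ℕ) : ℝ) * (c ^ 2 / 2) =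
            c ^ 2 / 2 + ((∑ σ, f σ) / 2 / 2 ^ m + m * (c ^ 2 / 2)) by
              push_cast; rw [pow_succ]; field_simp; ring, exp_add (c ^ 2 / 2)]
          ring

/-- Orthogonality of Rademacher signs; the offset `v` makes the induction run through the
parallelogram law. -/
lemma sum_norm_sq {E : Type*} [NormedAddCommGroup E] [InnerProductSpace ℝ E] :
    ∀ (m : ℕ) (x : Fin m → E) (v : E),
    ∑ σ : Fin m → Bool, ‖v + ∑ n, sgn (σ n) • x n‖ ^ 2 =
      2 ^ m * (‖v‖ ^ 2 + ∑ n, ‖x n‖ ^ 2)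
  | 0, x, v => by simp
  | m + 1, x, v => by
    have h1 := sum_norm_sq m (fun n => x n.succ) (v + x 0)
    have h2 := sum_norm_sq m (fun n => x n.succ) (v - x 0)
    have h3 := parallelogram_law_with_norm ℝ v (x 0)
    rw [sum_cons, Finset.sum_add_distrib]
    simp only [Fin.sum_univ_succ, Fin.cons_zero, Fin.cons_succ, ← add_assoc]
    simp only [sgn, if_true, one_smul, Bool.false_eq_true, if_false, neg_smul,
      ← sub_eq_add_neg] at h1 h2 ⊢
    rw [h1, h2, pow_succ]
    linear_combination (2 : ℝ) ^ m * h3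

/-- Exponential moment of the norm of a Rademacher sum: the mean is at most `B * √m`, by
`sum_norm_sq` and Cauchy–Schwarz, and the deviation is sub-Gaussian, by `bounded_differences`. -/
lemma base_bound {E : Type*} [NormedAddCommGroup E] [InnerProductSpace ℝ E] {m : ℕ}
    (x : Fin m → E) (B lam : ℝ) (hB : 0 ≤ B) (hlam : 0 ≤ lam) (hx : ∀ n, ‖x n‖ ≤ B) :
    ∑ σ : Fin m → Bool, exp (lam * ‖∑ n, sgn (σ n) • x n‖) ≤
      2 ^ m * exp (lam * B * √m + (lam * B * √m) ^ 2 / 2) := by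
  have hmean : ∑ σ : Fin m → Bool, ‖∑ n, sgn (σ n) • x n‖ ≤ 2 ^ m * (B * √m) := by
    refine abs_le_of_sq_le_sq' ?_ (by positivity) |>.2
    have h1 := sum_norm_sq m x 0
    simp only [zero_add, norm_zero] at h1
    have h2 : ∑ n, ‖x n‖ ^ 2 ≤ m * B ^ 2 := by
      have := Finset.sum_le_sum fun n (_ : n ∈ univ) => pow_le_pow_left₀ (norm_nonneg _) (hx n) 2
      simpa using this
    have h3 := sq_sum_le_card_mul_sum_sq (s := univ)
      (f := fun σ : Fin m → Bool => ‖∑ n, sgn (σ n) • x n‖)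
    rw [h1] at h3
    have hc : ((#(univ : Finset (Fin m → Bool)) : ℕ) : ℝ) = 2 ^ m := by simp
    rw [hc] at h3
    refine h3.trans ?_
    rw [mul_pow, mul_pow, Real.sq_sqrt (Nat.cast_nonneg m), ← mul_assoc, ← sq]
    gcongr
    simpa [mul_comm] using h2
  refine (bounded_differences (c := lam * B) m _ ?_).trans ?_
  · intro k σ
    rw [← mul_sub, abs_mul, abs_of_nonneg hlam, mul_left_comm]
    refine mul_le_mul_of_nonneg_left ?_ hlam
    refine (abs_norm_sub_norm_le _ _).trans ?_
    rw [← Finset.sum_sub_distrib, Finset.sum_eq_single k]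
    · simp only [Function.update_self, sgn, if_true, Bool.false_eq_true, if_false, ← sub_smul]
      rw [norm_smul]; norm_num; exact hx k
    · intro n _ hn
      simp [Function.update_of_ne hn]
    · simp
  · gcongr
    · rw [← Finset.mul_sum, div_le_iff₀ (by positivity)]
      nlinarith [mul_le_mul_of_nonneg_left hmean hlam]
    · rw [mul_pow _ (√m), Real.sq_sqrt (Nat.cast_nonneg m)]
      linarith

/-! ### Bound for the network class -/

/-- Exponential moment of the signed sum of the `k`-th layer outputs, where the weights may depend
on the signs: `k` peelings followed by the bound for the inputs. -/
lemma layer_bound (B : ℝ) (hB : 0 ≤ B) (Φ : ℕ → ℝ) (d : ℕ → ℕ) (a : ℕ → ℝ → ℝ) (m : ℕ)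
    (x : Fin m → Fin (d 0) → ℝ) (hx : ∀ n, l2Norm (x n) ≤ B) : ∀ (k : ℕ)
    (_ : ∀ h, h < k → 0 < Φ (h + 1)) (_ : ∀ h, h < k → LipschitzWith 1 (a (h + 1)))
    (_ : ∀ h, h < k → ∀ c : ℝ, 0 ≤ c → ∀ t : ℝ, a (h + 1) (c * t) = c * a (h + 1) t)
    (lam : ℝ) (_ : 0 ≤ lam)
    (W : (Fin m → Bool) → ∀ h : ℕ, Matrix (Fin (d (h + 1))) (Fin (d h)) ℝ)
    (_ : ∀ σ h, h < k → frobeniusNorm (W σ h) ≤ Φ (h + 1)),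
    ∑ σ, exp (lam * l2Norm (fun i => ∑ n, sgn (σ n) * netLayer d a (W σ) (x n) k i)) ≤
      2 ^ k * (2 ^ m * exp (lam * (∏ h ∈ range k, Φ (h + 1)) * B * √m +
        (lam * (∏ h ∈ range k, Φ (h + 1)) * B * √m) ^ 2 / 2))
  | 0, _, _, _, lam, hlam, W, _ => by
    have := base_bound (fun n => WithLp.toLp 2 (x n)) B lam hB hlam
      fun n => by rw [← l2Norm_eq]; exact hx n
    simp only [range_zero, prod_empty, mul_one, pow_zero, one_mul]
    refine le_trans (le_of_eq ?_) this
    refine Finset.sum_congr rfl fun σ _ => ?_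
    rw [l2Norm_eq]
    congr 3
    ext i
    simp [netLayer]
  | k + 1, hΦ, hlip, hhom, lam, hlam, W, hW => by
    have hR := hΦ k (Nat.lt_succ_self k)
    have := peel (q := d (k + 1))
      {g | ∃ U : ∀ h : ℕ, Matrix (Fin (d (h + 1))) (Fin (d h)) ℝ,
        (∀ h, h < k → frobeniusNorm (U h) ≤ Φ (h + 1)) ∧ g = fun n => netLayer d a U (x n) k}
      (2 ^ k * (2 ^ m * exp (lam * Φ (k + 1) * (∏ h ∈ range k, Φ (h + 1)) * B * √m +
        (lam * Φ (k + 1) * (∏ h ∈ range k, Φ (h + 1)) * B * √m) ^ 2 / 2)))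
      lam (Φ (k + 1)) hlam hR.le (a (k + 1)) (hlip k (Nat.lt_succ_self k))
      (hhom k (Nat.lt_succ_self k)) ?_ (fun σ n => netLayer d a (W σ) (x n) k)
      (fun σ => ⟨W σ, fun h hh => hW σ h (by omega), rfl⟩) (fun σ => W σ k)
      (fun σ => hW σ k (Nat.lt_succ_self k))
    · rw [prod_range_succ, mul_comm (∏ h ∈ range k, Φ (h + 1)), ← mul_assoc lam, pow_succ']
      simp only [netLayer]
      linarith
    · intro f hf
      choose U hU hfU using hf
      simp only [hfU]
      exact layer_bound B hB Φ d a m x hx k (fun h hh => hΦ h (by omega))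
        (fun h hh => hlip h (by omega)) (fun h hh => hhom h (by omega)) (lam * Φ (k + 1))
        (by positivity) U hU

/-- Jensen's inequality for `exp`, in the form used to pass from exponential moments to means. -/
lemma jensen_exp {ι : Type*} [Fintype ι] (g : ι → ℝ) (c : ℝ)
    (h : ∑ i, exp (g i) ≤ Fintype.card ι * exp c) : ∑ i, g i ≤ Fintype.card ι * c := by
  -- The graph of `exp` lies above its tangent line at `c`.
  have h1 : ∑ i, exp c * (g i - c + 1) ≤ ∑ i, exp (g i) := by
    refine Finset.sum_le_sum fun i _ => ?_
    have := mul_le_mul_of_nonneg_left (add_one_le_exp (g i - c)) (exp_pos c).le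
    rwa [← exp_add, add_sub_cancel] at this
  have h2 : ∑ i, (g i - c + 1) = ∑ i, g i - Fintype.card ι * c + Fintype.card ι := by
    simp [Finset.sum_add_distrib, Finset.sum_sub_distrib]
  rw [← Finset.mul_sum, h2] at h1
  have := le_of_mul_le_mul_left ((h1.trans h).trans_eq (mul_comm _ _)) (exp_pos c)
  linarith

/-- A sum of suprema is bounded by any bound on the sums of selections. No boundedness of the sets
is required. -/
lemma sum_sSup_le {ι : Type*} [Fintype ι] (S : ι → Set ℝ) (hS : ∀ i, (S i).Nonempty) (K : ℝ)
    (h : ∀ r : ι → ℝ, (∀ i, r i ∈ S i) → ∑ i, r i ≤ K) : ∑ i, sSup (S i) ≤ K := by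
  refine le_of_forall_pos_le_add fun ε hε => ?_
  set δ : ℝ := ε / (Fintype.card ι + 1) with hδ
  have hδ0 : 0 < δ := by positivity
  choose r hr hlt using fun i => exists_lt_of_lt_csSup (hS i) (sub_lt_self (sSup (S i)) hδ0)
  have h1 : ∑ i, sSup (S i) ≤ ∑ i, (r i + δ) :=
    Finset.sum_le_sum fun i _ => by linarith [hlt i]
  have h2 : Fintype.card ι * δ ≤ ε := by
    rw [hδ, mul_div_assoc', div_le_iff₀ (by positivity)]
    nlinarith
  rw [Finset.sum_add_distrib] at h1
  simp only [sum_const, card_univ, nsmul_eq_mul] at h1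
  linarith [h r hr]

/-- **Size-independent Rademacher complexity bound for norm-bounded networks
(Golowich–Rakhlin–Shamir; Lemma 2 of the paper).**
For `H`-layer networks with 1-Lipschitz positively homogeneous activations, Frobenius
norm bounds `Φ₁, …, Φ_{H-1}` on the weight matrices, Euclidean bound `Θ` on the output
vector, and inputs of norm at most `B`, the empirical Rademacher complexity is at most
`B (√(2 H log 2) + 1) Θ ∏ Φ_h / √m`. -/
theorem rademacher_complexity_deep_network_bound
    (H : ℕ) (hH : 1 ≤ H)
    (B : ℝ) (hB : 0 < B)
    (Φ : ℕ → ℝ) (hΦ : ∀ h, 1 ≤ h → h ≤ H - 1 → 0 < Φ h)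
    (Θ : ℝ) (hΘ : 0 < Θ)
    (d : ℕ → ℕ) (hd : ∀ h, h ≤ H - 1 → 1 ≤ d h)
    (a : ℕ → ℝ → ℝ)
    (ha_lip : ∀ h, 1 ≤ h → h ≤ H - 1 → LipschitzWith 1 (a h))
    (ha_hom : ∀ h, 1 ≤ h → h ≤ H - 1 → ∀ c : ℝ, 0 ≤ c → ∀ t : ℝ, a h (c * t) = c * a h t)
    (m : ℕ) (hm : 1 ≤ m)
    (x : Fin m → Fin (d 0) → ℝ) (hx : ∀ n, l2Norm (x n) ≤ B) :
    (1 / (2 : ℝ) ^ m) * ∑ σ : Fin m → Bool,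
        sSup { r : ℝ | ∃ (W : ∀ h : ℕ, Matrix (Fin (d (h + 1))) (Fin (d h)) ℝ)
            (θ : Fin (d (H - 1)) → ℝ),
            (∀ h, h < H - 1 → frobeniusNorm (W h) ≤ Φ (h + 1)) ∧ l2Norm θ ≤ Θ ∧
            r = (1 / (m : ℝ)) * ∑ n : Fin m, (if σ n then (1 : ℝ) else -1) *
                  ∑ i, θ i * netLayer d a W (x n) (H - 1) i }
      ≤ B * (Real.sqrt (2 * H * Real.log 2) + 1) * Θ *
          (∏ h ∈ Finset.range (H - 1), Φ (h + 1)) / Real.sqrt m := by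
  set P := ∏ h ∈ Finset.range (H - 1), Φ (h + 1) with hPdef
  have hP : 0 < P := Finset.prod_pos fun h hh =>
    hΦ (h + 1) (by omega) (by have := Finset.mem_range.1 hh; omega)
  have hm0 : (0 : ℝ) < m := by exact_mod_cast hm
  have hsm : 0 < √(m : ℝ) := Real.sqrt_pos.2 hm0
  have hH0 : (0 : ℝ) < H := by exact_mod_cast hH
  have hlog : 0 < Real.log 2 := Real.log_pos one_lt_two
  set s := Real.sqrt (2 * H * Real.log 2) with hs
  have hs0 : 0 < s := Real.sqrt_pos.2 (by positivity)
  have hs2 : s ^ 2 = 2 * H * Real.log 2 := Real.sq_sqrt (by positivity)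
  rw [one_div, inv_mul_le_iff₀ (by positivity)]
  apply sum_sSup_le
  · intro σ
    refine ⟨_, fun _ => 0, 0, fun h hh => ?_, ?_, rfl⟩
    · have := (hΦ (h + 1) (by omega) (by omega)).le
      simpa [frobeniusNorm] using this
    · simpa [l2Norm] using hΘ.le
  intro r hr
  choose W θ hW hθ hr using hr
  set y : (Fin m → Bool) → ℝ := fun σ =>
    l2Norm fun i => ∑ n, sgn (σ n) * netLayer d a (W σ) (x n) (H - 1) i with hy
  have hry : ∀ σ, r σ ≤ Θ / m * y σ := by
    intro σ
    have h1 : ∑ n : Fin m, (if σ n then (1 : ℝ) else -1) *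
        ∑ i, θ σ i * netLayer d a (W σ) (x n) (H - 1) i =
        ∑ i, θ σ i * ∑ n, sgn (σ n) * netLayer d a (W σ) (x n) (H - 1) i := by
      simp only [Finset.mul_sum]
      rw [Finset.sum_comm]
      exact Finset.sum_congr rfl fun _ _ => Finset.sum_congr rfl fun _ _ => by
        rw [sgn]; ring
    rw [hr σ, h1, one_div, div_mul_eq_mul_div, inv_mul_eq_div]
    gcongr
    refine (sum_mul_le_l2Norm _ _).trans ?_
    exact mul_le_mul_of_nonneg_right (hθ σ) (l2Norm_nonneg _)
  -- This parameter makes `lam * P * B * √m = s`, which balances the entropy `H * log 2 = s ^ 2 / 2`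
  -- of the peeling factors against the variance term `s ^ 2 / 2`.
  set lam := s / (P * B * √m) with hlam
  have hlam0 : 0 < lam := by positivity
  have hlamP : lam * P * B * √m = s := by rw [hlam]; field_simp
  have hmgf := layer_bound B hB.le Φ d a m x hx (H - 1)
    (fun h hh => hΦ _ (by omega) (by omega)) (fun h hh => ha_lip _ (by omega) (by omega))
    (fun h hh => ha_hom _ (by omega) (by omega)) lam hlam0.le W hW
  rw [← hPdef, hlamP] at hmgf
  have hy1 : ∑ σ, lam * y σ ≤ Fintype.card (Fin m → Bool) * (s ^ 2 + s) := by
    apply jensen_exp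
    refine hmgf.trans ?_
    have h2 : (2 : ℝ) ^ (H - 1) ≤ exp (s ^ 2 / 2) := by
      rw [hs2, show 2 * (H : ℝ) * Real.log 2 / 2 = H * Real.log 2 by ring, Real.exp_nat_mul,
        Real.exp_log two_pos]
      exact pow_le_pow_right₀ one_le_two (by omega)
    have h3 : exp (s ^ 2 + s) = exp (s ^ 2 / 2) * exp (s + s ^ 2 / 2) := by
      rw [← exp_add]; ring_nf
    rw [h3]
    simp only [Fintype.card_fun, Fintype.card_bool, Fintype.card_fin, Nat.cast_pow,
      Nat.cast_ofNat]
    rw [mul_left_comm]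
    gcongr
  simp only [Fintype.card_fun, Fintype.card_bool, Fintype.card_fin, Nat.cast_pow,
    Nat.cast_ofNat] at hy1
  rw [← Finset.mul_sum] at hy1
  have hy2 : ∑ σ, y σ ≤ 2 ^ m * (P * B * √m * (s + 1)) := by
    refine le_of_mul_le_mul_left (hy1.trans_eq ?_) hlam0
    linear_combination (-(2 : ℝ) ^ m * (s + 1)) * hlamP
  calc ∑ σ, r σ ≤ ∑ σ, Θ / m * y σ := Finset.sum_le_sum fun σ _ => hry σ
    _ = Θ / m * ∑ σ, y σ := by rw [Finset.mul_sum]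
    _ ≤ Θ / m * (2 ^ m * (P * B * √m * (s + 1))) := by gcongr
    _ = 2 ^ m * (B * (s + 1) * Θ * P / √m) := by
      have : (m : ℝ) = √m * √m := (Real.mul_self_sqrt hm0.le).symm
      field_simp
      rw [Real.sq_sqrt hm0.le]
end

section
/- Let 𝒳 be a type, m ≥ 1, x₁, …, x_m ∈ 𝒳, let F be a set of functions from 𝒳 to ℝ, and let φ : ℝ → ℝ be L-Lipschitz (L ≥ 0) with φ(0) = 0. Assume that for every sign vector σ ∈ {−1,1}^m the sets { Σ_{n=1}^{m} σ_n·φ(f(x_n)) : f ∈ F } and { Σ_{n=1}^{m} σ_n·f(x_n) : f ∈ F } are nonempty and bounded above. Then 2^{−m} · Σ_{σ ∈ {−1,1}^m} sup_{f ∈ F} Σ_{n=1}^{m} σ_n·φ(f(x_n)) ≤ L · 2^{−m} · Σ_{σ ∈ {−1,1}^m} sup_{f ∈ F} Σ_{n=1}^{m} σ_n·f(x_n). -/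
/-!
The signs are treated one coordinate at a time. For a single coordinate, with everything else
collected in a function `h`, the inequality
`sup (h + u) + sup (h - u) ≤ sup (h + v) + sup (h - v)` holds as soon as
`|u i - u j| ≤ |v i - v j|` for all `i j`: in `h i + u i + h j - u j` the difference `u i - u j` is
at most `|v i - v j|`, which is `v i - v j` or `v j - v i`, so that the expression is bounded by the
right-hand side, with the roles of `i` and `j` exchanged in the second case
(`iSup_add_iSup_sub_le`). Induction on the number of coordinates, with an arbitrary offset `g`
absorbing the coordinates whose sign is fixed, gives `sum_iSup_le_sum_iSup`. The theorem is the case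
`g = 0`, `u f n = φ (f (x n))`, `v f n = L * f (x n)`.

The mixed suprema occurring in the induction have to be finite; this holds because bounds for all
sign vectors bound every coordinate in absolute value (`exists_abs_le_of_bddAbove`).
-/

open Finset

/-- The real number `1` or `-1` encoded by a Boolean. -/
abbrev boolSign (b : Bool) : ℝ := if b then (1 : ℝ) else -1

lemma abs_boolSign_mul (b : Bool) (r : ℝ) : |boolSign b * r| = |r| := by
  cases b <;> simp [boolSign]

/-- The contraction inequality for a single random sign. -/
lemma iSup_add_iSup_sub_le {ι : Type*} [Nonempty ι] (h u v : ι → ℝ)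
    (huv : ∀ i j, |u i - u j| ≤ |v i - v j|)
    (hp : BddAbove (Set.range fun i => h i + v i))
    (hn : BddAbove (Set.range fun i => h i - v i)) :
    (⨆ i, (h i + u i)) + (⨆ i, (h i - u i)) ≤ (⨆ i, (h i + v i)) + (⨆ i, (h i - v i)) := by
  have key : ∀ i j, (h i + u i) + (h j - u j) ≤
      (⨆ i, (h i + v i)) + (⨆ i, (h i - v i)) := by
    intro i j
    have h1 := (le_abs_self _).trans (huv i j)
    have pi := le_ciSup hp i
    have pj := le_ciSup hp j
    have ni := le_ciSup hn i
    have nj := le_ciSup hn j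
    rcases abs_cases (v i - v j) with ⟨h2, _⟩ | ⟨h2, _⟩ <;> linarith
  rw [← le_sub_iff_add_le]
  refine ciSup_le fun i => ?_
  rw [le_sub_comm]
  refine ciSup_le fun j => ?_
  linarith [key i j]

lemma bddAbove_add_of_abs_le {ι : Type*} (g w : ι → ℝ) (hg : BddAbove (Set.range g))
    (hw : ∃ C, ∀ i, |w i| ≤ C) : BddAbove (Set.range fun i => g i + w i) := by
  obtain ⟨A, hA⟩ := hg
  obtain ⟨C, hC⟩ := hw
  refine ⟨A + C, ?_⟩
  rintro _ ⟨i, rfl⟩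
  exact add_le_add (hA ⟨i, rfl⟩) ((le_abs_self _).trans (hC i))

lemma exists_abs_signed_sum_le {ι : Type*} {m : ℕ} (v : ι → Fin m → ℝ)
    (hv : ∀ n, ∃ C, ∀ i, |v i n| ≤ C) (σ : Fin m → Bool) :
    ∃ C, ∀ i, |∑ n, boolSign (σ n) * v i n| ≤ C := by
  choose C hC using hv
  refine ⟨∑ n, C n, fun i => (Finset.abs_sum_le_sum_abs _ _).trans (Finset.sum_le_sum ?_)⟩
  intro n _
  rw [abs_boolSign_mul]
  exact hC n i

lemma sum_bool_fun_succ {m : ℕ} (G : (Fin (m + 1) → Bool) → ℝ) :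
    ∑ σ, G σ = ∑ b : Bool, ∑ τ : Fin m → Bool, G (Fin.cons b τ) := by
  rw [← Fintype.sum_prod_type']
  exact (Fintype.sum_equiv (Fin.consEquiv fun _ : Fin (m + 1) => Bool) _ _ fun _ => rfl).symm

/-- The contraction inequality for `m` signs. The offset `g` is what allows the induction on `m`:
it absorbs the term of a coordinate whose sign is fixed. -/
lemma sum_iSup_le_sum_iSup {ι : Type*} [Nonempty ι] (m : ℕ) (g : ι → ℝ) (u v : ι → Fin m → ℝ)
    (hg : BddAbove (Set.range g))
    (hu : ∀ n, ∃ C, ∀ i, |u i n| ≤ C) (hv : ∀ n, ∃ C, ∀ i, |v i n| ≤ C)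
    (huv : ∀ n i j, |u i n - u j n| ≤ |v i n - v j n|) :
    ∑ σ : Fin m → Bool, ⨆ i, (g i + ∑ n, boolSign (σ n) * u i n) ≤
      ∑ σ : Fin m → Bool, ⨆ i, (g i + ∑ n, boolSign (σ n) * v i n) := by
  induction m generalizing g with
  | zero => simp
  | succ m ih =>
    simp only [sum_bool_fun_succ, Fin.sum_univ_succ, Fin.cons_zero, Fin.cons_succ]
    -- With the first sign fixed, the remaining coordinates are replaced by induction.
    have tail : ∀ b : Bool,
        ∑ τ : Fin m → Bool, ⨆ i, (g i + (boolSign b * u i 0 +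
          ∑ n : Fin m, boolSign (τ n) * u i n.succ)) ≤
        ∑ τ : Fin m → Bool, ⨆ i, (g i + (boolSign b * u i 0 +
          ∑ n : Fin m, boolSign (τ n) * v i n.succ)) := by
      intro b
      have := ih (fun i => g i + boolSign b * u i 0) (fun i n => u i n.succ)
        (fun i n => v i n.succ)
        (bddAbove_add_of_abs_le _ _ hg (by simpa only [abs_boolSign_mul] using hu 0))
        (fun n => hu n.succ) (fun n => hv n.succ) (fun n => huv n.succ)
      simpa only [add_assoc] using this
    refine (Finset.sum_le_sum fun b _ => tail b).trans ?_
    rw [Fintype.sum_bool, Fintype.sum_bool, ← Finset.sum_add_distrib, ← Finset.sum_add_distrib]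
    refine Finset.sum_le_sum fun τ _ => ?_
    have hh : BddAbove (Set.range fun i => g i + ∑ n : Fin m, boolSign (τ n) * v i n.succ) :=
      bddAbove_add_of_abs_le _ _ hg
        (exists_abs_signed_sum_le (fun i n => v i n.succ) (fun n => hv n.succ) τ)
    have head := iSup_add_iSup_sub_le
      (fun i => g i + ∑ n : Fin m, boolSign (τ n) * v i n.succ)
      (fun i => u i 0) (fun i => v i 0) (huv 0)
      (bddAbove_add_of_abs_le _ _ hh (hv 0))
      (by
        simpa only [sub_eq_add_neg] using
          bddAbove_add_of_abs_le _ (fun i => -v i 0) hh (by simpa only [abs_neg] using hv 0))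
    have e : ∀ (w : ι → ℝ) (b : Bool), (fun i => g i + (boolSign b * w i +
        ∑ n : Fin m, boolSign (τ n) * v i n.succ)) =
        fun i => (g i + ∑ n : Fin m, boolSign (τ n) * v i n.succ) + boolSign b * w i := by
      intro w b
      funext i
      ring
    rw [iSup, iSup, iSup, iSup, e (fun i => u i 0), e (fun i => u i 0), e (fun i => v i 0),
      e (fun i => v i 0)]
    simpa [boolSign, iSup, sub_eq_add_neg] using head

/-- Upper bounds for all signed sums bound each coordinate: adding the signed sums for `σ` and for
the vector that agrees with `σ` only at `n` leaves twice the `n`-th term. -/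
lemma exists_abs_le_of_bddAbove {ι : Type*} {m : ℕ} (w : ι → Fin m → ℝ)
    (hw : ∀ σ : Fin m → Bool, BddAbove (Set.range fun i => ∑ n, boolSign (σ n) * w i n))
    (n : Fin m) : ∃ C, ∀ i, |w i n| ≤ C := by
  have signed : ∀ b : Bool, ∃ C, ∀ i, boolSign b * w i n ≤ C := by
    intro b
    obtain ⟨A, hA⟩ := hw fun _ => b
    obtain ⟨B, hB⟩ := hw fun k => if k = n then b else !b
    refine ⟨(A + B) / 2, fun i => ?_⟩
    have h1 := hA ⟨i, rfl⟩
    have h2 := hB ⟨i, rfl⟩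
    have h3 : (∑ k, boolSign b * w i k) + ∑ k, boolSign (if k = n then b else !b) * w i k
        = 2 * (boolSign b * w i n) := by
      rw [← Finset.sum_add_distrib, Finset.sum_eq_single n]
      · simp only [if_true]
        ring
      · intro k _ hk
        cases b <;> simp [boolSign, hk]
      · simp
    simp only at h1 h2
    linarith
  obtain ⟨A, hA⟩ := signed true
  obtain ⟨B, hB⟩ := signed false
  refine ⟨max A B, fun i => abs_le'.2 ⟨?_, ?_⟩⟩
  · exact le_max_of_le_left (by simpa [boolSign] using hA i)
  · exact le_max_of_le_right (by simpa [boolSign] using hB i)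

/-- **Rademacher contraction (Ledoux–Talagrand) principle (Lemma 1 of the paper).**
If `φ : ℝ → ℝ` is `L`-Lipschitz with `φ 0 = 0`, then the empirical Rademacher complexity
of `φ ∘ F` is at most `L` times that of `F` (the normalizing factor `1/m` cancels, so it
is omitted on both sides). -/
theorem rademacher_contraction
    {𝒳 : Type*} (m : ℕ) (hm : 1 ≤ m) (x : Fin m → 𝒳)
    (F : Set (𝒳 → ℝ)) (hF : F.Nonempty)
    (φ : ℝ → ℝ) (L : ℝ) (hL : 0 ≤ L)
    (hφ : ∀ s t : ℝ, |φ s - φ t| ≤ L * |s - t|) (hφ0 : φ 0 = 0)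
    (hbdd₁ : ∀ σ : Fin m → Bool, BddAbove
      { r : ℝ | ∃ f ∈ F, r = ∑ n : Fin m, (if σ n then (1 : ℝ) else -1) * φ (f (x n)) })
    (hbdd₂ : ∀ σ : Fin m → Bool, BddAbove
      { r : ℝ | ∃ f ∈ F, r = ∑ n : Fin m, (if σ n then (1 : ℝ) else -1) * f (x n) }) :
    (1 / (2 : ℝ) ^ m) * ∑ σ : Fin m → Bool,
        sSup { r : ℝ | ∃ f ∈ F, r = ∑ n : Fin m, (if σ n then (1 : ℝ) else -1) * φ (f (x n)) }
      ≤ L * ((1 / (2 : ℝ) ^ m) * ∑ σ : Fin m → Bool,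
        sSup { r : ℝ | ∃ f ∈ F, r = ∑ n : Fin m, (if σ n then (1 : ℝ) else -1) * f (x n) }) := by
  have : Nonempty F := hF.to_subtype
  have range_eq : ∀ (ψ : ℝ → ℝ) (σ : Fin m → Bool),
      { r : ℝ | ∃ f ∈ F, r = ∑ n : Fin m, (if σ n then (1 : ℝ) else -1) * ψ (f (x n)) } =
        Set.range fun f : F => ∑ n, boolSign (σ n) * ψ (f.1 (x n)) := by
    intro ψ σ
    ext r
    exact ⟨fun ⟨f, hf, h⟩ => ⟨⟨f, hf⟩, h.symm⟩, fun ⟨f, h⟩ => ⟨f.1, f.2, h.symm⟩⟩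
  have range_id := range_eq fun t => t
  simp only [range_eq φ, range_id] at hbdd₁ hbdd₂ ⊢
  have hu := exists_abs_le_of_bddAbove (fun (f : F) n => φ (f.1 (x n))) hbdd₁
  have hv := exists_abs_le_of_bddAbove (fun (f : F) n => f.1 (x n)) hbdd₂
  have main := sum_iSup_le_sum_iSup m (fun _ : F => (0 : ℝ)) (fun f n => φ (f.1 (x n)))
    (fun f n => L * f.1 (x n)) (by simp) hu
    (by
      intro n
      obtain ⟨C, hC⟩ := hv n
      refine ⟨L * C, fun f => ?_⟩
      rw [abs_mul, abs_of_nonneg hL]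
      exact mul_le_mul_of_nonneg_left (hC f) hL)
    (by
      intro n f g
      rw [← mul_sub, abs_mul, abs_of_nonneg hL]
      exact hφ _ _)
  simp only [zero_add, mul_left_comm _ L, ← Finset.mul_sum, ← Real.mul_iSup_of_nonneg hL] at main
  rw [mul_left_comm]
  exact mul_le_mul_of_nonneg_left main (by positivity)
end
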